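/- Let $K$ be an algebraically closed field, $\Gamma$ a finite tree with a cyclic ordering of the edges around each vertex, and $A=KQ_\Gamma/I$ the basic Brauer tree algebra of $\Gamma$ with multiplicity one. Here the vertices of $Q_\Gamma$ are the edges of $\Gamma$; for each vertex $v$ of $\Gamma$ and each edge $i$ at $v$ there is an arrow from $i$ to the edge that follows $i$ around $v$ (a loop if $v$ is a leaf), and the arrows at $v$ form one cycle of $Q_\Gamma$, called an $A$-cycle. The ideal $I$ is generated by the products of two composable arrows that belong to different $A$-cycles and by the differences of the two full cycles starting at the same vertex of $Q_\Gamma$. Modules are left modules, and $Ae_i$ is the indecomposable projective module of the vertex $i$. Let $T_i$ and $T_j$ be indecomposable partial tilting complexes (that is, $\mathrm{Hom}_{D^b(A)}(T,T[k])=0$ for all $k\neq 0$), each of which is the minimal projective presentation $T=(P_0\xrightarrow{f}P_1)$, in degrees $0$ and $1$, of an indecomposable non-projective $A$-module. The diagram of such a $T$ is a connected path without self-intersections on $Q_\Gamma$, with at least one arrow, running through arrows in either direction and changing its orientation exactly where it changes the $A$-cycle, such that, for suitable decompositions $P_0\cong\bigoplus_{s}Ae_s$ over its sources $s$ and $P_1\cong\bigoplus_{t}Ae_t$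 over its sinks $t$, it is the union of the paths from $s$ to $t$ along a common $A$-cycle over all pairs $(s,t)$ for which the component $Ae_s\to Ae_t$ of $f$ is nonzero. The intersection of two diagrams consists of their common vertices and their common arrows. If the intersection of the diagrams of $T_i$ and $T_j$ has more than one connected component, then at least one of the spaces $\mathrm{Hom}_{D^b(A)}(T_i,T_j[-1])$ and $\mathrm{Hom}_{D^b(A)}(T_j,T_i[-1])$ is nonzero. -/

import Mathlib

open CategoryTheory CategoryTheory.Limits

universe w u v

/-- A Brauer tree with multiplicity one: a tree together with a cyclic ordering of the edges
around each vertex.  A dart of the tree is an edge `e` with a chosen end `x`; it stands for the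
place of `e` in the cyclic ordering around `x`, and `next` sends it to the place of the edge that
follows `e` around `x`. -/
structure BrauerTree (V : Type v) where
  graph : SimpleGraph V
  isTree : graph.IsTree
  next : Equiv.Perm graph.Dart
  next_fst : ∀ d, (next d).fst = d.fst
  sameCycle : ∀ d d' : graph.Dart, d.fst = d'.fst → next.SameCycle d d'

namespace BrauerTree

variable {V : Type v} (Γ : BrauerTree V)

/-- The vertices of the quiver `Q_Γ`: the edges of the tree. -/
abbrev Vertex : Type v := Γ.graph.edgeSet

/-- The arrows of the quiver `Q_Γ`: for each dart `d`, an arrow from the edge of `d` to the next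
edge around the vertex `d.fst`.  At a leaf of the tree this is a loop.  The arrows with a given
`d.fst` form one cycle of the quiver, and these cycles are the `A`-cycles; each vertex of the
quiver lies on exactly two of them. -/
abbrev Arrow : Type v := Γ.graph.Dart

variable {Γ}

/-- The vertex of the quiver where an arrow starts. -/
def src (a : Γ.Arrow) : Γ.Vertex := ⟨a.edge, a.edge_mem⟩

/-- The vertex of the quiver where an arrow ends. -/
def tgt (a : Γ.Arrow) : Γ.Vertex := src (Γ.next a)

/-- The `A`-cycle of an arrow, given by the corresponding vertex of the tree. -/
def cycle (a : Γ.Arrow) : V := a.fst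

variable (Γ)

/-- Generators of the path algebra of `Q_Γ`: trivial paths and arrows. -/
inductive Gen : Type v
  | vertex (x : Γ.Vertex)
  | arrow (a : Γ.Arrow)

variable (K : Type u) [Field K]

/-- The trivial path at `x`, as an element of the free algebra. -/
def freeIdem (x : Γ.Vertex) : FreeAlgebra K Γ.Gen := FreeAlgebra.ι K (Gen.vertex x)

/-- The arrow `a`, as an element of the free algebra. -/
def freeArrow (a : Γ.Arrow) : FreeAlgebra K Γ.Gen := FreeAlgebra.ι K (Gen.arrow a)

/-- The product of the `k` consecutive arrows of an `A`-cycle that begin with `a`.  Here `x * y`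
is the path that first runs through `x` and then through `y`. -/
def freeArc : Γ.Arrow → ℕ → FreeAlgebra K Γ.Gen
  | a, 0 => freeIdem Γ K (src a)
  | a, k + 1 => freeArrow Γ K a * freeArc (Γ.next a) k

/-- The relations of the basic Brauer tree algebra with multiplicity one.  The first five present
the path algebra of `Q_Γ` (a complete set of orthogonal idempotents, and arrows with their ends);
the last two are the Brauer relations. -/
inductive Rel : FreeAlgebra K Γ.Gen → FreeAlgebra K Γ.Gen → Prop
  | sum_idem : Rel (∑ᶠ x : Γ.Vertex, freeIdem Γ K x) 1
  | idem (x : Γ.Vertex) : Rel (freeIdem Γ K x * freeIdem Γ K x) (freeIdem Γ K x)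
  | orth (x y : Γ.Vertex) (h : x ≠ y) : Rel (freeIdem Γ K x * freeIdem Γ K y) 0
  | src_mul (a : Γ.Arrow) : Rel (freeIdem Γ K (src a) * freeArrow Γ K a) (freeArrow Γ K a)
  | mul_tgt (a : Γ.Arrow) : Rel (freeArrow Γ K a * freeIdem Γ K (tgt a)) (freeArrow Γ K a)
  /-- `αβ = 0 = βα`: an arrow followed by the arrow that leaves its end on the other `A`-cycle. -/
  | change (a : Γ.Arrow) : Rel (freeArrow Γ K a * freeArrow Γ K (Γ.next a).symm) 0
  /-- The two full cycles that start at a given vertex of the quiver agree. -/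
  | full (a : Γ.Arrow) :
      Rel (freeArc Γ K a (Function.minimalPeriod Γ.next a))
        (freeArc Γ K a.symm (Function.minimalPeriod Γ.next a.symm))

/-- The basic Brauer tree algebra `A = K Q_Γ / I` with multiplicity one. -/
def Alg : Type (max u v) := RingQuot (Rel Γ K)

noncomputable instance : Ring (Γ.Alg K) := inferInstanceAs (Ring (RingQuot (Rel Γ K)))

noncomputable instance : Algebra K (Γ.Alg K) := inferInstanceAs (Algebra K (RingQuot (Rel Γ K)))

/-- The idempotent `e_x` of `A`. -/
noncomputable def idem (x : Γ.Vertex) : Γ.Alg K := RingQuot.mkAlgHom K (Rel Γ K) (freeIdem Γ K x)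

/-- The indecomposable projective left module `A e_x`. -/
abbrev Proj (x : Γ.Vertex) : Type (max u v) := Ideal.span {idem Γ K x}

/-- The cochain complexes of left `A`-modules. -/
abbrev Cplx : Type (max u v + 1) := CochainComplex (ModuleCat.{max u v} (Γ.Alg K)) ℤ

variable {Γ}

/-- The arrows of the path from `x` to `y` along an `A`-cycle that contains both (for `x ≠ y`,
there is at most one such cycle); the path is shorter than the full cycle. -/
def pathArrows (x y : Γ.Vertex) : Set Γ.Arrow :=
  {a | ∃ (b : Γ.Arrow) (k l : ℕ), src b = x ∧ src (Γ.next^[k] b) = y ∧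
    k < Function.minimalPeriod Γ.next b ∧ l < k ∧ a = Γ.next^[l] b}

variable (Γ)

/-- A connected path without self-intersections on the quiver `Q_Γ`, with at least one arrow,
which may run through arrows in both directions and which changes its orientation exactly where
it changes the `A`-cycle. -/
structure Diagram where
  /-- the number of arrows -/
  len : ℕ
  len_pos : 0 < len
  vertex : Fin (len + 1) → Γ.Vertex
  vertex_injective : Function.Injective vertex
  arrow : Fin len → Γ.Arrow
  /-- whether the path runs through the arrow in the direction of the arrow -/
  forward : Fin len → Prop
  step_forward : ∀ k, forward k →
    src (arrow k) = vertex k.castSucc ∧ tgt (arrow k) = vertex k.succ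
  step_backward : ∀ k, ¬ forward k →
    src (arrow k) = vertex k.succ ∧ tgt (arrow k) = vertex k.castSucc
  turn : ∀ k l : Fin len, (l : ℕ) = k + 1 →
    ((forward k ↔ forward l) ↔ cycle (arrow k) = cycle (arrow l))

namespace Diagram

variable {Γ}
variable (D D' : Γ.Diagram)

/-- The set of vertices on the diagram. -/
def verts : Set Γ.Vertex := Set.range D.vertex

/-- The set of arrows on the diagram. -/
def arrows : Set Γ.Arrow := Set.range D.arrow

/-- The sources of the diagram: the vertices where no arrow of the diagram ends. -/
def sources : Set Γ.Vertex := {x | x ∈ D.verts ∧ ∀ a ∈ D.arrows, tgt a ≠ x}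

/-- The sinks of the diagram: the vertices where no arrow of the diagram starts. -/
def sinks : Set Γ.Vertex := {x | x ∈ D.verts ∧ ∀ a ∈ D.arrows, src a ≠ x}

/-- The intersection of two diagrams: the common vertices, joined by the common arrows. -/
def inter : SimpleGraph ↥(D.verts ∩ D'.verts) :=
  SimpleGraph.fromRel fun x y => ∃ a ∈ D.arrows ∩ D'.arrows, src a = x.1 ∧ tgt a = y.1

variable {K}

open Classical in
/-- `D` is the diagram of the complex `T`, with differential `f : T⁰ → T¹`: there are
decompositions of `T⁰` as the sum of the `A e_i` over the sources `i` of `D`, and of `T¹` as the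
sum of the `A e_j` over the sinks `j` of `D`, such that `D` consists of the paths from `i` to `j`
for all `i`, `j` for which the component `A e_i → A e_j` of `f` is nonzero. -/
def IsDiagramOf (T : Γ.Cplx K) : Prop :=
  ∃ (φ : T.X 0 ≃ₗ[Γ.Alg K] ((i : D.sources) → Γ.Proj K i.1))
    (ψ : T.X 1 ≃ₗ[Γ.Alg K] ((j : D.sinks) → Γ.Proj K j.1)),
    D.arrows = ⋃ (i : D.sources) (j : D.sinks)
      (_ : LinearMap.proj (R := Γ.Alg K) j ∘ₗ ψ.toLinearMap ∘ₗ (T.d 0 1).hom ∘ₗ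
        φ.symm.toLinearMap ∘ₗ
          LinearMap.single (Γ.Alg K) (fun i : D.sources => Γ.Proj K i.1) i ≠ 0),
      pathArrows i.1 j.1

end Diagram

end BrauerTree

/-- A submodule `N` of `M` is superfluous if `N + L = M` implies `L = M`. -/
def Submodule.IsSuperfluous {R M : Type*} [Ring R] [AddCommGroup M] [Module R M]
    (N : Submodule R M) : Prop :=
  ∀ L : Submodule R M, N ⊔ L = ⊤ → L = ⊤

section Complexes

variable {R : Type u} [Ring R]

/-- `T` is a complex `T⁰ → T¹` of finitely generated projective modules, concentrated in the
degrees `0` and `1`. -/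
structure IsTwoTermPerfect (T : CochainComplex (ModuleCat.{u} R) ℤ) : Prop where
  isZero : ∀ k : ℤ, k ≠ 0 → k ≠ 1 → IsZero (T.X k)
  finite : ∀ k, Module.Finite R (T.X k)
  projective : ∀ k, Module.Projective R (T.X k)

/-- `T⁰ → T¹ → M → 0` is the minimal projective presentation of `M`: `T¹` is a projective cover
of `M`, and `T⁰` is a projective cover of the kernel of `T¹ → M`. -/
structure IsMinimalPresentation (T : CochainComplex (ModuleCat.{u} R) ℤ)
    (M : ModuleCat.{u} R) : Prop extends IsTwoTermPerfect T where
  exact : ∃ π : T.X 1 ⟶ M, Function.Surjective π.hom ∧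
    LinearMap.ker π.hom = LinearMap.range (T.d 0 1).hom
  superfluous_range : (LinearMap.range (T.d 0 1).hom).IsSuperfluous
  superfluous_ker : (LinearMap.ker (T.d 0 1).hom).IsSuperfluous

variable [HasDerivedCategory.{w} (ModuleCat.{u} R)]

/-- `Hom(S, T[k]) = 0` in the derived category.  (The bounded derived category is a full
subcategory of the derived category, stable under shifts.) -/
def HomVanishes (S T : CochainComplex (ModuleCat.{u} R) ℤ) (k : ℤ) : Prop :=
  ∀ f : DerivedCategory.Q.obj S ⟶ (DerivedCategory.Q.obj T)⟦k⟧, f = 0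

/-- `T` is an indecomposable partial tilting complex `T⁰ → T¹` that is the minimal projective
presentation of an indecomposable non-projective module. -/
structure IsPartialTiltingPresentation (T : CochainComplex (ModuleCat.{u} R) ℤ) : Prop where
  indecomposable : Indecomposable (DerivedCategory.Q.obj T)
  partialTilting : ∀ k : ℤ, k ≠ 0 → HomVanishes T T k
  presentation : ∃ M : ModuleCat.{u} R, Indecomposable M ∧ ¬ Module.Projective R M ∧
    IsMinimalPresentation T M

end Complexes

/-!
In a tree, two diagrams that meet at two vertices but do not share the path between them can only
separate inside a single `A`-cycle: between two consecutive common vertices they run along the two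
complementary arcs of one cycle, because any other edge would separate the two routes.  Hence their
arrows cover that cycle, although neither diagram contains all of it.

Walking around the covered cycle, one meets a stretch of common arrows that begins at a source `s`
of one diagram and ends at a sink `t` of the other one.  The arc of the cycle that leads from `t`
back to `s` is a nonzero path, and right multiplication by it is a map `A e_t → A e_s`.  Composed
with any path from a source of the second diagram to `t`, or from `s` to a sink of the first one,
it either changes the cycle or exceeds the full cycle, so it commutes with the (zero) differentials
and gives a nonzero morphism of degree `-1`.  Exchanging the diagrams gives the other direction.
-/
namespace BrauerTree

section Combinatorics

variable {V : Type v} {Γ : BrauerTree V}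

theorem src_eq_src_iff {a b : Γ.Arrow} : src a = src b ↔ a = b ∨ a = b.symm := by
  rw [src, src, Subtype.mk.injEq, SimpleGraph.dart_edge_eq_iff]

theorem src_symm (a : Γ.Arrow) : src a.symm = src a := src_eq_src_iff.2 (Or.inr rfl)

theorem cycle_symm_ne (a : Γ.Arrow) : cycle a.symm ≠ cycle a := a.snd_ne_fst

theorem arrow_ext {a b : Γ.Arrow} (hsrc : src a = src b) (hcycle : cycle a = cycle b) : a = b :=
  (src_eq_src_iff.1 hsrc).resolve_right fun h => cycle_symm_ne b (h ▸ hcycle)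

theorem cycle_mem_src (a : Γ.Arrow) : cycle a ∈ (src a).1 := Sym2.mem_mk_left _ _

theorem cycle_next (a : Γ.Arrow) : cycle (Γ.next a) = cycle a := Γ.next_fst a

theorem cycle_mem_tgt (a : Γ.Arrow) : cycle a ∈ (tgt a).1 :=
  cycle_next a ▸ cycle_mem_src (Γ.next a)

theorem cycle_iterate (a : Γ.Arrow) (k : ℕ) : cycle (Γ.next^[k] a) = cycle a := by
  induction k with
  | zero => rfl
  | succ k ih => rw [Function.iterate_succ_apply', cycle_next, ih]

theorem tgt_iterate (a : Γ.Arrow) (k : ℕ) : tgt (Γ.next^[k] a) = src (Γ.next^[k + 1] a) := by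
  rw [Function.iterate_succ_apply', tgt]

theorem eq_of_mem_of_mem {x y : Γ.Vertex} (hxy : x ≠ y) {u v : V} (hux : u ∈ x.1)
    (huy : u ∈ y.1) (hvx : v ∈ x.1) (hvy : v ∈ y.1) : u = v := by
  by_contra huv
  exact hxy (Subtype.ext (((Sym2.mem_and_mem_iff huv).1 ⟨hux, hvx⟩).trans
    ((Sym2.mem_and_mem_iff huv).1 ⟨huy, hvy⟩).symm))

theorem exists_iterate_eq [Finite V] {a b : Γ.Arrow} (h : cycle a = cycle b) :
    ∃ k, Γ.next^[k] a = b := by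
  have : Finite Γ.Arrow := .of_injective _ SimpleGraph.Dart.toProd_injective
  obtain ⟨k, hk⟩ := (Γ.sameCycle a b h).exists_nat_pow_eq
  exact ⟨k, by rw [Equiv.Perm.iterate_eq_pow, hk]⟩

theorem exists_src_eq_cycle_eq {x : Γ.Vertex} {u : V} (hu : u ∈ x.1) :
    ∃ a : Γ.Arrow, src a = x ∧ cycle a = u := by
  obtain ⟨w, hw⟩ := Sym2.mem_iff_exists.1 hu
  exact ⟨⟨(u, w), by simpa only [hw, SimpleGraph.mem_edgeSet] using x.2⟩, Subtype.ext hw.symm, rfl⟩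

theorem minimalPeriod_next_pos [Finite V] (a : Γ.Arrow) :
    0 < Function.minimalPeriod Γ.next a := by
  obtain ⟨k, hk⟩ := exists_iterate_eq (cycle_next a)
  exact (Function.IsPeriodicPt.minimalPeriod_pos k.succ_pos hk :)

theorem minimalPeriod_next_eq_of_cycle_eq [Finite V] {a b : Γ.Arrow} (h : cycle a = cycle b) :
    Function.minimalPeriod Γ.next a = Function.minimalPeriod Γ.next b := by
  obtain ⟨k, rfl⟩ := exists_iterate_eq h
  exact (Function.minimalPeriod_apply_iterate
    (Function.minimalPeriod_pos_iff_mem_periodicPts.1 (minimalPeriod_next_pos a)) k).symm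

theorem exists_iterate_lt_minimalPeriod_eq [Finite V] {a b : Γ.Arrow} (h : cycle a = cycle b) :
    ∃ k < Function.minimalPeriod Γ.next a, Γ.next^[k] a = b := by
  obtain ⟨k, rfl⟩ := exists_iterate_eq h
  exact ⟨_, Nat.mod_lt _ (minimalPeriod_next_pos a), Function.iterate_mod_minimalPeriod_eq⟩

/-- The edges `f` and `g` lie on the same side of the edge `e`: deleting `e` from the tree leaves
them in the same component. -/
def SameSide (e f g : Γ.Vertex) : Prop :=
  ∀ p ∈ f.1, ∀ q ∈ g.1, (Γ.graph.deleteEdges {e.1}).Reachable p q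

theorem SameSide.refl {e f : Γ.Vertex} (hf : f ≠ e) : SameSide e f f := by
  intro p hp q hq
  by_cases hpq : p = q
  · rw [hpq]
  · have hfpq : f.1 = s(p, q) := (Sym2.mem_and_mem_iff hpq).1 ⟨hp, hq⟩
    refine SimpleGraph.Adj.reachable ?_
    rw [SimpleGraph.deleteEdges_adj, ← SimpleGraph.mem_edgeSet, ← hfpq]
    exact ⟨f.2, fun h => hf (Subtype.ext h)⟩

theorem SameSide.symm {e f g : Γ.Vertex} (h : SameSide e f g) : SameSide e g f :=
  fun p hp q hq => (h q hq p hp).symm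

theorem SameSide.trans {e f g h : Γ.Vertex} (hfg : SameSide e f g) (hgh : SameSide e g h) :
    SameSide e f h := fun p hp q hq =>
  (hfg p hp _ g.1.out_fst_mem).trans (hgh _ g.1.out_fst_mem q hq)

theorem SameSide.of_mem {e f g : Γ.Vertex} (hf : f ≠ e) (hg : g ≠ e) {u : V} (huf : u ∈ f.1)
    (hug : u ∈ g.1) : SameSide e f g := fun p hp q hq =>
  (SameSide.refl hf p hp u huf).trans (SameSide.refl hg u hug q hq)

theorem not_sameSide {e f g : Γ.Vertex} {u v : V} (huv : u ≠ v) (hue : u ∈ e.1) (hve : v ∈ e.1)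
    (huf : u ∈ f.1) (hvg : v ∈ g.1) : ¬ SameSide e f g := by
  intro h
  have he : e.1 = s(u, v) := (Sym2.mem_and_mem_iff huv).1 ⟨hue, hve⟩
  have hbridge := SimpleGraph.isAcyclic_iff_forall_isBridge.1 Γ.isTree.isAcyclic e.2
  rw [he, SimpleGraph.isBridge_iff] at hbridge
  exact hbridge (by simpa only [he] using h u huf v hvg)

namespace Diagram

variable {D D' : Γ.Diagram}

theorem cycle_mem_vertex (k : Fin D.len) :
    cycle (D.arrow k) ∈ (D.vertex k.castSucc).1 ∧ cycle (D.arrow k) ∈ (D.vertex k.succ).1 := by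
  by_cases hk : D.forward k
  · rw [← (D.step_forward k hk).1, ← (D.step_forward k hk).2]
    exact ⟨cycle_mem_src _, cycle_mem_tgt _⟩
  · rw [← (D.step_backward k hk).1, ← (D.step_backward k hk).2]
    exact ⟨cycle_mem_tgt _, cycle_mem_src _⟩

theorem src_mem_verts {a : Γ.Arrow} (ha : a ∈ D.arrows) : src a ∈ D.verts := by
  obtain ⟨k, rfl⟩ := ha
  by_cases hk : D.forward k
  · exact ⟨_, (D.step_forward k hk).1.symm⟩
  · exact ⟨_, (D.step_backward k hk).1.symm⟩

theorem tgt_mem_verts {a : Γ.Arrow} (ha : a ∈ D.arrows) : tgt a ∈ D.verts := by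
  obtain ⟨k, rfl⟩ := ha
  by_cases hk : D.forward k
  · exact ⟨_, (D.step_forward k hk).2.symm⟩
  · exact ⟨_, (D.step_backward k hk).2.symm⟩

theorem forward_succ {k l : Fin D.len} (hk : D.forward k)
    (h : tgt (D.arrow k) = src (D.arrow l)) : (l : ℕ) = k + 1 ∧ D.forward l := by
  rw [(D.step_forward k hk).2] at h
  by_cases hl : D.forward l
  · rw [(D.step_forward l hl).1] at h
    exact ⟨(congrArg Fin.val (D.vertex_injective h)).symm, hl⟩
  · rw [(D.step_backward l hl).1] at h
    exact absurd hk (Fin.succ_injective _ (D.vertex_injective h) ▸ hl)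

theorem backward_succ {k l : Fin D.len} (hk : ¬ D.forward k)
    (h : tgt (D.arrow k) = src (D.arrow l)) : (k : ℕ) = l + 1 ∧ ¬ D.forward l := by
  rw [(D.step_backward k hk).2] at h
  by_cases hl : D.forward l
  · rw [(D.step_forward l hl).1] at h
    exact absurd hl (Fin.castSucc_injective _ (D.vertex_injective h) ▸ hk)
  · rw [(D.step_backward l hl).1] at h
    exact ⟨congrArg Fin.val (D.vertex_injective h), hl⟩

theorem next_eq {a b : Γ.Arrow} (ha : a ∈ D.arrows) (hb : b ∈ D.arrows) (h : tgt a = src b) :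
    Γ.next a = b := by
  obtain ⟨k, rfl⟩ := ha
  obtain ⟨l, rfl⟩ := hb
  refine arrow_ext h ((cycle_next _).trans ?_)
  by_cases hk : D.forward k
  · obtain ⟨hkl, hl⟩ := forward_succ hk h
    exact (D.turn k l hkl).1 (iff_of_true hk hl)
  · obtain ⟨hlk, hl⟩ := backward_succ hk h
    exact ((D.turn l k hlk).1 (iff_of_false hl hk)).symm

/-- The arrow of a covered `A`-cycle with the largest index in the diagram would be followed by an
arrow of larger index, at its end if it runs forward and at its start otherwise. -/
theorem exists_cycle_eq_notMem_arrows (D : Γ.Diagram) (c : Γ.Arrow) :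
    ∃ a, cycle a = cycle c ∧ a ∉ D.arrows := by
  classical
  by_contra! hall
  obtain ⟨k, hk, hmax⟩ := (Finset.univ.filter fun k => cycle (D.arrow k) = cycle c).exists_max_image
    id (by obtain ⟨k, hk⟩ := hall c rfl; exact ⟨k, by simp [hk]⟩)
  simp only [Finset.mem_filter_univ, id] at hk hmax
  by_cases hf : D.forward k
  · obtain ⟨l, hl⟩ := hall (Γ.next (D.arrow k)) ((cycle_next _).trans hk)
    have hlk := (forward_succ hf (congrArg src hl.symm)).1
    have := Fin.le_def.1 (hmax l (by rw [hl, cycle_next, hk]))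
    omega
  · have hnext : Γ.next (Γ.next.symm (D.arrow k)) = D.arrow k := Γ.next.apply_symm_apply _
    have hcyc : cycle (Γ.next.symm (D.arrow k)) = cycle c := by
      rw [← cycle_next, hnext, hk]
    obtain ⟨l, hl⟩ := hall _ hcyc
    have htgt : tgt (D.arrow l) = src (D.arrow k) := by rw [hl, tgt, hnext]
    have hlb : ¬ D.forward l := fun hlf => hf (forward_succ hlf htgt).2
    have hlk := (backward_succ hlb htgt).1
    have := Fin.le_def.1 (hmax l (by rw [hl, hcyc]))
    omega

/-- `D` contains the directed path from `x` to `y` along the `A`-cycle of `u`; the path may be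
trivial. -/
def HasArc (D : Γ.Diagram) (u : V) (x y : Γ.Vertex) : Prop :=
  ∃ (a : Γ.Arrow) (n : ℕ), cycle a = u ∧ src a = x ∧ src (Γ.next^[n] a) = y ∧
    ∀ k < n, Γ.next^[k] a ∈ D.arrows

namespace HasArc

theorem left_mem {u : V} {x y : Γ.Vertex} (h : D.HasArc u x y) : u ∈ x.1 := by
  obtain ⟨a, n, rfl, rfl, -, -⟩ := h
  exact cycle_mem_src a

theorem right_mem {u : V} {x y : Γ.Vertex} (h : D.HasArc u x y) : u ∈ y.1 := by
  obtain ⟨a, n, rfl, -, rfl, -⟩ := h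
  exact cycle_iterate a n ▸ cycle_mem_src _

theorem of_mem {a : Γ.Arrow} (ha : a ∈ D.arrows) : D.HasArc (cycle a) (src a) (tgt a) :=
  ⟨a, 1, rfl, rfl, rfl, fun k hk => by rwa [Nat.lt_one_iff.1 hk]⟩

theorem trans {u : V} {x y z : Γ.Vertex} (hxy : D.HasArc u x y) (hyz : D.HasArc u y z) :
    D.HasArc u x z := by
  obtain ⟨a, n, hau, hax, hay, ha⟩ := hxy
  obtain ⟨b, m, hbu, hby, hbz, hb⟩ := hyz
  obtain rfl : Γ.next^[n] a = b :=
    arrow_ext (hay.trans hby.symm) ((cycle_iterate a n).trans (hau.trans hbu.symm))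
  refine ⟨a, m + n, hau, hax, by rw [Function.iterate_add_apply, hbz], fun k hk => ?_⟩
  rcases lt_or_ge k n with hkn | hnk
  · exact ha k hkn
  · rw [← Nat.sub_add_cancel hnk, Function.iterate_add_apply]
    exact hb _ (by omega)

end HasArc

theorem inter_reachable_of_iterate {a : Γ.Arrow} {n : ℕ} {x y : ↥(D.verts ∩ D'.verts)}
    (hx : src a = x.1) (hy : src (Γ.next^[n] a) = y.1)
    (h : ∀ k < n, Γ.next^[k] a ∈ D.arrows ∩ D'.arrows) : (D.inter D').Reachable x y := by
  induction n generalizing y with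
  | zero => rw [Subtype.ext (hx.symm.trans hy)]
  | succ n ih =>
    have hn := h n n.lt_succ_self
    let z : ↥(D.verts ∩ D'.verts) :=
      ⟨src (Γ.next^[n] a), src_mem_verts hn.1, src_mem_verts hn.2⟩
    refine (ih (y := z) rfl fun k hk => h k (by omega)).trans ?_
    by_cases hzy : z = y
    · rw [hzy]
    · refine SimpleGraph.Adj.reachable ?_
      rw [inter, SimpleGraph.fromRel_adj]
      exact ⟨hzy, Or.inl ⟨_, hn, rfl, (tgt_iterate a n).trans hy⟩⟩

theorem inter_reachable_of_hasArc {u : V} {x y : ↥(D.verts ∩ D'.verts)}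
    (h : D.HasArc u x.1 y.1) (h' : D'.HasArc u x.1 y.1) : (D.inter D').Reachable x y := by
  obtain ⟨a, n, hau, hax, hay, ha⟩ := h
  obtain ⟨b, m, hbu, hbx, hby, hb⟩ := h'
  obtain rfl : a = b := arrow_ext (hax.trans hbx.symm) (hau.trans hbu.symm)
  rcases le_total n m with hnm | hmn
  · exact inter_reachable_of_iterate hax hay fun k hk => ⟨ha k hk, hb k (by omega)⟩
  · exact inter_reachable_of_iterate hbx hby fun k hk => ⟨ha k (by omega), hb k hk⟩

theorem mem_arrows_union_of_hasArc [Finite V] {u : V} {x y : Γ.Vertex} (hxy : x ≠ y)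
    (h : D.HasArc u x y) (h' : D'.HasArc u y x) {c : Γ.Arrow} (hc : cycle c = u) :
    c ∈ D.arrows ∪ D'.arrows := by
  obtain ⟨a, n, hau, hax, hay, ha⟩ := h
  obtain ⟨b, m, hbu, hby, hbx, hb⟩ := h'
  obtain rfl : Γ.next^[n] a = b :=
    arrow_ext (hay.trans hby.symm) ((cycle_iterate a n).trans (hau.trans hbu.symm))
  have hperiodic : Function.IsPeriodicPt Γ.next (m + n) a := by
    rw [Function.IsPeriodicPt, Function.IsFixedPt, Function.iterate_add_apply]
    exact arrow_ext (hbx.trans hax.symm) (by rw [cycle_iterate, cycle_iterate])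
  have hn : n ≠ 0 := by
    rintro rfl
    exact hxy (hax.symm.trans hay)
  obtain ⟨j, rfl⟩ := exists_iterate_eq (hau.trans hc.symm)
  rw [← hperiodic.iterate_mod_apply]
  have hlt : j % (m + n) < m + n := Nat.mod_lt _ (by omega)
  rcases lt_or_ge (j % (m + n)) n with hjn | hnj
  · exact Or.inl (ha _ hjn)
  · refine Or.inr ?_
    rw [← Nat.sub_add_cancel hnj, Function.iterate_add_apply]
    exact hb _ (by omega)

theorem sameSide_vertex_of_le {e : Γ.Vertex} {i j : Fin (D.len + 1)} (hij : i ≤ j)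
    (he : ∀ k ∈ Set.Icc i j, D.vertex k ≠ e) : SameSide e (D.vertex i) (D.vertex j) := by
  induction j using Fin.induction with
  | zero =>
    obtain rfl := Fin.le_zero_iff.1 hij
    exact .refl (he _ (Set.right_mem_Icc.2 le_rfl))
  | succ k ih =>
    rcases hij.eq_or_lt with rfl | hlt
    · exact .refl (he _ (Set.right_mem_Icc.2 le_rfl))
    · have hik : i ≤ k.castSucc := Fin.le_castSucc_iff.2 hlt
      refine (ih hik fun l hl => he l ⟨hl.1, hl.2.trans k.castSucc_lt_succ.le⟩).trans ?_
      exact .of_mem (he _ ⟨hik, k.castSucc_lt_succ.le⟩) (he _ ⟨hij, le_rfl⟩)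
        (cycle_mem_vertex k).1 (cycle_mem_vertex k).2

theorem sameSide_vertex {e : Γ.Vertex} {i j : Fin (D.len + 1)}
    (he : ∀ k ∈ Set.uIcc i j, D.vertex k ≠ e) : SameSide e (D.vertex i) (D.vertex j) := by
  rcases le_total i j with hij | hji
  · exact sameSide_vertex_of_le hij (Set.uIcc_of_le hij ▸ he)
  · exact (sameSide_vertex_of_le hji (Set.uIcc_of_ge hji ▸ he)).symm

theorem not_sameSide_of_cycle_ne {k l : Fin D.len} (hkl : (l : ℕ) = k + 1)
    (hcycle : cycle (D.arrow k) ≠ cycle (D.arrow l)) {i j : Fin (D.len + 1)}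
    (hi : i < l.castSucc) (hj : l.castSucc < j) :
    ¬ SameSide (D.vertex l.castSucc) (D.vertex i) (D.vertex j) := by
  have hl : l.castSucc = k.succ := Fin.ext hkl
  have hik : i ≤ k.castSucc := Fin.le_castSucc_iff.2 (hl ▸ hi)
  have hlj : l.succ ≤ j := Fin.castSucc_lt_iff_succ_le.1 hj
  intro h
  have hleft : SameSide (D.vertex l.castSucc) (D.vertex i) (D.vertex k.castSucc) :=
    sameSide_vertex_of_le hik fun m hm =>
      D.vertex_injective.ne (hl ▸ hm.2.trans_lt k.castSucc_lt_succ).ne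
  have hright : SameSide (D.vertex l.castSucc) (D.vertex l.succ) (D.vertex j) :=
    sameSide_vertex_of_le hlj fun m hm =>
      D.vertex_injective.ne (l.castSucc_lt_succ.trans_le hm.1).ne'
  exact not_sameSide hcycle (hl ▸ (cycle_mem_vertex k).2) (cycle_mem_vertex l).1
    (cycle_mem_vertex k).1 (cycle_mem_vertex l).2 ((hleft.symm.trans h).trans hright.symm)

theorem hasArc_vertex_succ {i : Fin (D.len + 1)} {k : Fin D.len} (hik : i ≤ k.castSucc)
    (hcycle : ∀ m l : Fin D.len, (l : ℕ) = m + 1 → i < l.castSucc → l ≤ k →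
      cycle (D.arrow m) = cycle (D.arrow l)) :
    D.forward k ∧ D.HasArc (cycle (D.arrow k)) (D.vertex i) (D.vertex k.succ) ∨
      ¬ D.forward k ∧ D.HasArc (cycle (D.arrow k)) (D.vertex k.succ) (D.vertex i) := by
  induction hk : (k : ℕ) using Nat.strong_induction_on generalizing k with
  | _ n ih =>
    subst hk
    have harc := HasArc.of_mem (D := D) ⟨k, rfl⟩
    rcases hik.eq_or_lt with rfl | hlt
    · by_cases hf : D.forward k
      · exact .inl ⟨hf, (D.step_forward k hf).1 ▸ (D.step_forward k hf).2 ▸ harc⟩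
      · exact .inr ⟨hf, (D.step_backward k hf).1 ▸ (D.step_backward k hf).2 ▸ harc⟩
    · obtain ⟨n, hn⟩ : ∃ n, (k : ℕ) = n + 1 :=
        Nat.exists_eq_succ_of_ne_zero (Nat.ne_zero_of_lt hlt)
      let m : Fin D.len := ⟨n, by omega⟩
      have hmk : m.succ = k.castSucc := Fin.ext hn.symm
      have him : i ≤ m.castSucc := Fin.le_castSucc_iff.2 (hmk ▸ hlt)
      have hmk_cycle : cycle (D.arrow m) = cycle (D.arrow k) := hcycle m k hn hlt le_rfl
      have hforward : D.forward m ↔ D.forward k := (D.turn m k hn).2 hmk_cycle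
      have hm := ih n (by omega) him (fun p l hpl hil hlm =>
        hcycle p l hpl hil (hlm.trans (Fin.le_def.2 (by simp only [m]; omega)))) rfl
      rw [hforward, hmk_cycle, hmk] at hm
      refine hm.imp (fun ⟨hf, h⟩ => ⟨hf, h.trans ?_⟩) fun ⟨hf, h⟩ => ⟨hf, .trans ?_ h⟩
      · exact (D.step_forward k hf).1 ▸ (D.step_forward k hf).2 ▸ harc
      · exact (D.step_backward k hf).1 ▸ (D.step_backward k hf).2 ▸ harc

theorem hasArc_or_hasArc_of_disjoint_of_lt {i j : Fin (D.len + 1)} {i' j' : Fin (D'.len + 1)}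
    (hi : D.vertex i = D'.vertex i') (hj : D.vertex j = D'.vertex j')
    (hdisj : Disjoint (D.vertex '' Set.uIoo i j) (D'.vertex '' Set.uIoo i' j')) (hij : i < j) :
    ∃ u, D.HasArc u (D.vertex i) (D.vertex j) ∨ D.HasArc u (D.vertex j) (D.vertex i) := by
  have havoid : ∀ l ∈ Set.Ioo i j, ∀ l' ∈ Set.uIcc i' j', D'.vertex l' ≠ D.vertex l := by
    intro l hl l' hl' heq
    have hi' : l' ≠ i' := by
      rintro rfl
      exact hl.1.ne (D.vertex_injective (hi.trans heq))
    have hj' : l' ≠ j' := by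
      rintro rfl
      exact hl.2.ne' (D.vertex_injective (hj.trans heq))
    have hl'_mem : l' ∈ Set.uIoo i' j' := by grind [Set.mem_uIcc, Set.uIoo_of_le, Set.uIoo_of_ge]
    exact Set.disjoint_left.1 hdisj ⟨l, Set.uIoo_of_lt hij ▸ hl, rfl⟩ ⟨l', hl'_mem, heq⟩
  have hcycle : ∀ k l : Fin D.len, (l : ℕ) = k + 1 → l.castSucc ∈ Set.Ioo i j →
      cycle (D.arrow k) = cycle (D.arrow l) := by
    intro k l hkl hl
    by_contra hne
    refine not_sameSide_of_cycle_ne hkl hne hl.1 hl.2 ?_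
    rw [hi, hj]
    exact sameSide_vertex (havoid _ hl)
  obtain ⟨k, rfl⟩ := Fin.exists_succ_eq.2 (Fin.ne_zero_of_lt hij)
  exact ⟨_, (hasArc_vertex_succ (Fin.le_castSucc_iff.2 hij) fun m l hml hil hlk =>
    hcycle m l hml ⟨hil, Fin.castSucc_lt_succ_iff.2 hlk⟩).imp And.right And.right⟩

theorem hasArc_or_hasArc_of_disjoint {i j : Fin (D.len + 1)} {i' j' : Fin (D'.len + 1)}
    (hi : D.vertex i = D'.vertex i') (hj : D.vertex j = D'.vertex j')
    (hdisj : Disjoint (D.vertex '' Set.uIoo i j) (D'.vertex '' Set.uIoo i' j')) (hij : i ≠ j) :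
    ∃ u, D.HasArc u (D.vertex i) (D.vertex j) ∨ D.HasArc u (D.vertex j) (D.vertex i) := by
  rcases hij.lt_or_gt with hlt | hgt
  · exact hasArc_or_hasArc_of_disjoint_of_lt hi hj hdisj hlt
  · simp only [Set.uIoo_comm i, Set.uIoo_comm i'] at hdisj
    exact (hasArc_or_hasArc_of_disjoint_of_lt hj hi hdisj hgt).imp fun u => Or.symm

theorem exists_consecutive (h : ¬ (D.inter D').Preconnected) :
    ∃ (i j : Fin (D.len + 1)) (hi : D.vertex i ∈ D'.verts) (hj : D.vertex j ∈ D'.verts),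
      (∀ k ∈ Set.uIoo i j, D.vertex k ∉ D'.verts) ∧
      ¬ (D.inter D').Reachable ⟨D.vertex i, ⟨i, rfl⟩, hi⟩ ⟨D.vertex j, ⟨j, rfl⟩, hj⟩ := by
  by_contra! hall
  have hreach : ∀ i j : Fin (D.len + 1), i ≤ j → ∀ (hi : D.vertex i ∈ D'.verts)
      (hj : D.vertex j ∈ D'.verts),
      (D.inter D').Reachable ⟨D.vertex i, ⟨i, rfl⟩, hi⟩ ⟨D.vertex j, ⟨j, rfl⟩, hj⟩ := by
    intro i j hij hi hj
    induction hn : (j - i : ℕ) using Nat.strong_induction_on generalizing i j with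
    | _ n ih =>
      by_cases hbetween : ∃ k ∈ Set.Ioo i j, D.vertex k ∈ D'.verts
      · obtain ⟨k, ⟨hik, hkj⟩, hk⟩ := hbetween
        exact (ih _ (by omega) i k hik.le hi hk rfl).trans (ih _ (by omega) k j hkj.le hk hj rfl)
      · push Not at hbetween
        exact hall i j hi hj (Set.uIoo_of_le hij ▸ hbetween)
  refine h ?_
  rintro ⟨_, ⟨i, rfl⟩, hi⟩ ⟨_, ⟨j, rfl⟩, hj⟩
  rcases le_total i j with hij | hji
  · exact hreach i j hij hi hj
  · exact (hreach j i hji hj hi).symm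

theorem exists_hasArc_and_hasArc (h : ¬ (D.inter D').Preconnected) :
    ∃ u x y, x ≠ y ∧ D.HasArc u x y ∧ D'.HasArc u y x := by
  obtain ⟨i, j, hi, hj, hbetween, hunreach⟩ := exists_consecutive h
  have hij : D.vertex i ≠ D.vertex j := fun heq => hunreach (by simp only [heq]; exact .rfl)
  obtain ⟨i', hi'⟩ := hi
  obtain ⟨j', hj'⟩ := hj
  have hdisj : Disjoint (D.vertex '' Set.uIoo i j) (D'.vertex '' Set.uIoo i' j') := by
    rw [Set.disjoint_left]
    rintro _ ⟨k, hk, rfl⟩ ⟨k', -, hk'⟩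
    exact hbetween k hk ⟨k', hk'⟩
  obtain ⟨u, hu⟩ := hasArc_or_hasArc_of_disjoint hi'.symm hj'.symm hdisj (ne_of_apply_ne _ hij)
  obtain ⟨u', hu'⟩ := hasArc_or_hasArc_of_disjoint hi' hj' hdisj.symm
    (ne_of_apply_ne D'.vertex (by rwa [hi', hj']))
  rw [hi', hj'] at hu'
  obtain rfl : u = u' := eq_of_mem_of_mem hij
    (hu.elim HasArc.left_mem HasArc.right_mem) (hu.elim HasArc.right_mem HasArc.left_mem)
    (hu'.elim HasArc.left_mem HasArc.right_mem) (hu'.elim HasArc.right_mem HasArc.left_mem)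
  rcases hu with hu | hu <;> rcases hu' with hu' | hu'
  · exact absurd (inter_reachable_of_hasArc hu hu') hunreach
  · exact ⟨u, _, _, hij, hu, hu'⟩
  · exact ⟨u, _, _, hij.symm, hu, hu'⟩
  · exact absurd (inter_reachable_of_hasArc hu hu').symm hunreach

/-- A directed path along an `A`-cycle, from `src (Γ.next a)` to `src (Γ.next^[m + 1] a)`, that
belongs to both diagrams and is extended by the arrow `a` before it in `D'` only and by the arrow
after it in `D` only.  It leads from a source of `D` to a sink of `D'`. -/
structure Overlap (D D' : Γ.Diagram) (a : Γ.Arrow) (m : ℕ) : Prop where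
  notMem_left : a ∉ D.arrows
  mem_left : ∀ j ≤ m, Γ.next^[j + 1] a ∈ D.arrows
  mem_right : ∀ j ≤ m, Γ.next^[j] a ∈ D'.arrows
  notMem_right : Γ.next^[m + 1] a ∉ D'.arrows

theorem exists_overlap_of_cover [Finite V] {c : Γ.Arrow}
    (hcover : ∀ a, cycle a = cycle c → a ∈ D.arrows ∪ D'.arrows) : ∃ a m, D.Overlap D' a m := by
  classical
  have hgap : ∃ n a, cycle a = cycle c ∧ a ∉ D.arrows ∧ Γ.next^[n] a ∉ D'.arrows := by
    obtain ⟨a, hac, ha⟩ := D.exists_cycle_eq_notMem_arrows c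
    obtain ⟨b, hbc, hb⟩ := D'.exists_cycle_eq_notMem_arrows c
    obtain ⟨n, rfl⟩ := exists_iterate_eq (hac.trans hbc.symm)
    exact ⟨n, a, hac, ha, hb⟩
  obtain ⟨a, hac, ha, hna⟩ := Nat.find_spec hgap
  have hleft : ∀ j, 0 < j → j ≤ Nat.find hgap → Γ.next^[j] a ∈ D.arrows := by
    intro j hj hjn
    rcases hjn.eq_or_lt with rfl | hlt
    · exact (hcover _ ((cycle_iterate a _).trans hac)).resolve_right hna
    · by_contra hja
      refine Nat.find_min hgap (Nat.sub_lt (hj.trans hlt) hj)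
        ⟨_, (cycle_iterate a j).trans hac, hja, ?_⟩
      rwa [← Function.iterate_add_apply, Nat.sub_add_cancel hjn]
  have hright : ∀ j < Nat.find hgap, Γ.next^[j] a ∈ D'.arrows := by
    intro j hj
    by_contra hja
    exact Nat.find_min hgap hj ⟨a, hac, ha, hja⟩
  obtain ⟨m, hm⟩ : ∃ m, Nat.find hgap = m + 1 := by
    refine Nat.exists_eq_succ_of_ne_zero fun hzero => ?_
    rw [hzero] at hna
    exact (hcover a hac).elim ha hna
  rw [hm] at hna hleft hright
  exact ⟨a, m, ha, fun j hj => hleft _ j.succ_pos (by omega), fun j hj => hright j (by omega), hna⟩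

theorem exists_overlap [Finite V] (h : ¬ (D.inter D').Preconnected) :
    (∃ a m, D.Overlap D' a m) ∧ ∃ a m, D'.Overlap D a m := by
  obtain ⟨u, x, y, hxy, hD, hD'⟩ := exists_hasArc_and_hasArc h
  obtain ⟨c, -, rfl⟩ := exists_src_eq_cycle_eq hD.left_mem
  have hcover : ∀ a, cycle a = cycle c → a ∈ D.arrows ∪ D'.arrows := fun a ha =>
    mem_arrows_union_of_hasArc hxy hD hD' ha
  exact ⟨exists_overlap_of_cover hcover,
    exists_overlap_of_cover (Set.union_comm D.arrows D'.arrows ▸ hcover)⟩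

namespace Overlap

variable {a : Γ.Arrow} {m : ℕ}

theorem source_mem (h : D.Overlap D' a m) : src (Γ.next a) ∈ D.sources := by
  have hmem : Γ.next a ∈ D.arrows := h.mem_left 0 m.zero_le
  refine ⟨src_mem_verts hmem, fun b hb hba => h.notMem_left ?_⟩
  rwa [← Γ.next.injective (next_eq hb hmem hba)]

theorem sink_mem (h : D.Overlap D' a m) : src (Γ.next^[m + 1] a) ∈ D'.sinks := by
  have hmem : Γ.next^[m] a ∈ D'.arrows := h.mem_right m le_rfl
  rw [← tgt_iterate]
  refine ⟨tgt_mem_verts hmem, fun b hb hba => h.notMem_right ?_⟩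
  rwa [Function.iterate_succ_apply', next_eq hmem hb hba.symm]

theorem src_notMem_sources (h : D.Overlap D' a m) {j : ℕ} (hj : j ≤ m) :
    src (Γ.next^[j + 1] a) ∉ D'.sources := fun hmem =>
  hmem.2 _ (h.mem_right j hj) (tgt_iterate a j)

theorem src_notMem_sinks (h : D.Overlap D' a m) {j : ℕ} (hj : j ≤ m) :
    src (Γ.next^[j + 1] a) ∉ D.sinks := fun hmem =>
  hmem.2 _ (h.mem_left j hj) rfl

theorem lt_minimalPeriod [Finite V] (h : D.Overlap D' a m) :
    m + 1 < Function.minimalPeriod Γ.next a := by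
  by_contra! hle
  obtain ⟨p, hp⟩ := Nat.exists_eq_succ_of_ne_zero (minimalPeriod_next_pos a).ne'
  have hmem := h.mem_left p (by omega)
  rw [← Nat.succ_eq_add_one, ← hp, Function.iterate_minimalPeriod] at hmem
  exact h.notMem_left hmem

end Overlap

end Diagram

end Combinatorics

end BrauerTree

namespace BrauerTree

section Algebra

variable {V : Type v} {Γ : BrauerTree V} (K : Type u) [Field K]

variable (Γ) in
/-- The quotient map from the free algebra onto `A`. -/
noncomputable def mkAlg : FreeAlgebra K Γ.Gen →ₐ[K] Γ.Alg K := RingQuot.mkAlgHom K (Rel Γ K)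

variable {K} in
theorem mkAlg_eq_of_rel {f g : FreeAlgebra K Γ.Gen} (h : Rel Γ K f g) :
    mkAlg Γ K f = mkAlg Γ K g :=
  RingQuot.mkAlgHom_rel K h

variable (Γ) in
theorem mkAlg_surjective : Function.Surjective (mkAlg Γ K) :=
  RingQuot.mkAlgHom_surjective K (Rel Γ K)

/-- The arrow `a`, as an element of `A`. -/
noncomputable def arr (a : Γ.Arrow) : Γ.Alg K := mkAlg Γ K (freeArrow Γ K a)

/-- The path of the `k` consecutive arrows of an `A`-cycle that begin with `a`, as an element
of `A`. -/
noncomputable def arc (a : Γ.Arrow) (k : ℕ) : Γ.Alg K := mkAlg Γ K (freeArc Γ K a k)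

theorem arc_zero (a : Γ.Arrow) : arc K a 0 = idem Γ K (src a) := rfl

theorem arc_succ (a : Γ.Arrow) (k : ℕ) : arc K a (k + 1) = arr K a * arc K (Γ.next a) k :=
  map_mul (mkAlg Γ K) _ _

theorem isIdempotentElem_idem (x : Γ.Vertex) : IsIdempotentElem (idem Γ K x) :=
  (map_mul (mkAlg Γ K) _ _).symm.trans (mkAlg_eq_of_rel (.idem x))

theorem idem_mul_idem_of_ne {x y : Γ.Vertex} (h : x ≠ y) : idem Γ K x * idem Γ K y = 0 :=
  (map_mul (mkAlg Γ K) _ _).symm.trans ((mkAlg_eq_of_rel (.orth x y h)).trans (map_zero _))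

theorem sum_idem [Fintype Γ.Vertex] : ∑ x : Γ.Vertex, idem Γ K x = 1 := by
  have h := mkAlg_eq_of_rel (Rel.sum_idem (Γ := Γ) (K := K))
  rwa [finsum_eq_sum_of_fintype, map_sum, map_one] at h

theorem idem_src_mul_arr (a : Γ.Arrow) : idem Γ K (src a) * arr K a = arr K a :=
  (map_mul (mkAlg Γ K) _ _).symm.trans (mkAlg_eq_of_rel (.src_mul a))

theorem arr_mul_idem_tgt (a : Γ.Arrow) : arr K a * idem Γ K (tgt a) = arr K a :=
  (map_mul (mkAlg Γ K) _ _).symm.trans (mkAlg_eq_of_rel (.mul_tgt a))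

theorem arr_mul_arr_symm (a : Γ.Arrow) : arr K a * arr K (Γ.next a).symm = 0 :=
  (map_mul (mkAlg Γ K) _ _).symm.trans ((mkAlg_eq_of_rel (.change a)).trans (map_zero _))

theorem arc_minimalPeriod_symm (a : Γ.Arrow) :
    arc K a.symm (Function.minimalPeriod Γ.next a.symm) =
      arc K a (Function.minimalPeriod Γ.next a) :=
  (mkAlg_eq_of_rel (.full a)).symm

theorem arc_one (a : Γ.Arrow) : arc K a 1 = arr K a := (arc_succ K a 0).trans (arr_mul_idem_tgt K a)

theorem idem_src_mul_arc (a : Γ.Arrow) (k : ℕ) :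
    idem Γ K (src a) * arc K a k = arc K a k := by
  cases k with
  | zero => exact isIdempotentElem_idem K _
  | succ k => rw [arc_succ, ← mul_assoc, idem_src_mul_arr]

theorem arc_mul_idem (a : Γ.Arrow) (k : ℕ) :
    arc K a k * idem Γ K (src (Γ.next^[k] a)) = arc K a k := by
  induction k generalizing a with
  | zero => exact isIdempotentElem_idem K _
  | succ k ih => rw [arc_succ, mul_assoc, Function.iterate_succ_apply, ih]

theorem idem_mul_arc_of_ne {x : Γ.Vertex} {a : Γ.Arrow} (h : x ≠ src a) (k : ℕ) :
    idem Γ K x * arc K a k = 0 := by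
  rw [← idem_src_mul_arc, ← mul_assoc, idem_mul_idem_of_ne K h, zero_mul]

theorem arc_mul_idem_of_ne {a : Γ.Arrow} {k : ℕ} {y : Γ.Vertex} (h : src (Γ.next^[k] a) ≠ y) :
    arc K a k * idem Γ K y = 0 := by
  rw [← arc_mul_idem, mul_assoc, idem_mul_idem_of_ne K h, mul_zero]

theorem arc_add (a : Γ.Arrow) (k l : ℕ) :
    arc K a (k + l) = arc K a k * arc K (Γ.next^[k] a) l := by
  induction k generalizing a with
  | zero => rw [Nat.zero_add, arc_zero, Function.iterate_zero_apply, idem_src_mul_arc]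
  | succ k ih =>
    rw [Nat.add_right_comm, arc_succ, arc_succ, ih, mul_assoc, Function.iterate_succ_apply]

theorem arc_mul_arc_symm (a : Γ.Arrow) {k l : ℕ} (hk : k ≠ 0) (hl : l ≠ 0) :
    arc K a k * arc K (Γ.next^[k] a).symm l = 0 := by
  obtain ⟨k, rfl⟩ := Nat.exists_eq_succ_of_ne_zero hk
  obtain ⟨l, rfl⟩ := Nat.exists_eq_succ_of_ne_zero hl
  rw [Nat.succ_eq_add_one, arc_add, arc_one, arc_succ, mul_assoc, ← mul_assoc (arr K _),
    Function.iterate_succ_apply', arr_mul_arr_symm, zero_mul, mul_zero]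

/-- The full cycle at `src a` can be traversed along either `A`-cycle, and is followed by an arrow
of the other one. -/
theorem arc_eq_zero [Finite V] (a : Γ.Arrow) {n : ℕ} (hn : Function.minimalPeriod Γ.next a < n) :
    arc K a n = 0 := by
  obtain ⟨l, rfl⟩ := Nat.exists_eq_add_of_lt hn
  have h := arc_mul_arc_symm K a.symm (minimalPeriod_next_pos a.symm).ne' l.succ_ne_zero
  rw [Function.iterate_minimalPeriod, SimpleGraph.Dart.symm_symm, arc_minimalPeriod_symm] at h
  rwa [add_assoc, arc_add, Function.iterate_minimalPeriod]

variable (Γ) in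
/-- The subspace of `A` spanned by the paths along the `A`-cycles, including the trivial ones. -/
noncomputable def arcSpan : Submodule K (Γ.Alg K) :=
  Submodule.span K (Set.range fun p : Γ.Arrow × ℕ => arc K p.1 p.2)

theorem arc_mem_arcSpan (a : Γ.Arrow) (k : ℕ) : arc K a k ∈ arcSpan Γ K :=
  Submodule.subset_span ⟨(a, k), rfl⟩

theorem idem_mul_arc_mem_arcSpan (x : Γ.Vertex) (a : Γ.Arrow) (k : ℕ) :
    idem Γ K x * arc K a k ∈ arcSpan Γ K := by
  by_cases h : x = src a
  · rw [h, idem_src_mul_arc]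
    exact arc_mem_arcSpan K a k
  · rw [idem_mul_arc_of_ne K h]
    exact zero_mem _

theorem arr_mul_arc_mem_arcSpan (b a : Γ.Arrow) (k : ℕ) :
    arr K b * arc K a k ∈ arcSpan Γ K := by
  by_cases h : tgt b = src a
  · rcases src_eq_src_iff.1 h.symm with rfl | rfl
    · exact arc_succ K b k ▸ arc_mem_arcSpan K b (k + 1)
    · rcases eq_or_ne k 0 with rfl | hk
      · rw [arc_zero, src_symm, ← arc_zero, ← arc_succ]
        exact arc_mem_arcSpan K b 1
      · have hchange := arc_mul_arc_symm K b one_ne_zero hk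
        rw [arc_one, Function.iterate_one] at hchange
        exact hchange ▸ zero_mem _
  · rw [← arr_mul_idem_tgt, mul_assoc, idem_mul_arc_of_ne K h, mul_zero]
    exact zero_mem _

theorem mul_mem_arcSpan (z : Γ.Alg K) {s : Γ.Alg K} (hs : s ∈ arcSpan Γ K) :
    z * s ∈ arcSpan Γ K := by
  have hof_arc : ∀ z : Γ.Alg K, (∀ a k, z * arc K a k ∈ arcSpan Γ K) →
      ∀ s ∈ arcSpan Γ K, z * s ∈ arcSpan Γ K := fun z hz =>
    (Submodule.span_le (p := (arcSpan Γ K).comap (LinearMap.mulLeft K z))).2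
      (Set.range_subset_iff.2 fun p => hz p.1 p.2)
  obtain ⟨w, rfl⟩ := mkAlg_surjective Γ K z
  induction w using FreeAlgebra.induction generalizing s with
  | grade0 r =>
    rw [AlgHom.commutes, ← Algebra.smul_def]
    exact Submodule.smul_mem _ r hs
  | grade1 g =>
    cases g with
    | vertex x => exact hof_arc (idem Γ K x) (idem_mul_arc_mem_arcSpan K x) s hs
    | arrow b => exact hof_arc (arr K b) (arr_mul_arc_mem_arcSpan K b) s hs
  | mul y z hy hz =>
    rw [map_mul, mul_assoc]
    exact hy (hz hs)
  | add y z hy hz =>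
    rw [map_add, add_mul]
    exact add_mem (hy hs) (hz hs)

theorem arcSpan_eq_top [Finite V] : arcSpan Γ K = ⊤ := by
  have : Fintype Γ.Vertex := Fintype.ofFinite _
  have hone : (1 : Γ.Alg K) ∈ arcSpan Γ K := by
    rw [← sum_idem]
    refine sum_mem fun x _ => ?_
    obtain ⟨a, rfl, -⟩ := exists_src_eq_cycle_eq x.1.out_fst_mem
    exact arc_mem_arcSpan K a 0
  exact Submodule.eq_top_iff'.2 fun z => mul_one z ▸ mul_mem_arcSpan K z hone

theorem idem_mul_mul_idem_mem_span_arc [Finite V] (x y : Γ.Vertex) (z : Γ.Alg K) :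
    idem Γ K x * z * idem Γ K y ∈ Submodule.span K
      {w | ∃ (a : Γ.Arrow) (k : ℕ), src a = x ∧ src (Γ.next^[k] a) = y ∧ arc K a k = w} := by
  have hz : z ∈ arcSpan Γ K := arcSpan_eq_top (Γ := Γ) K ▸ Submodule.mem_top
  change z ∈ Submodule.comap
    (LinearMap.mulRight K (idem Γ K y) ∘ₗ LinearMap.mulLeft K (idem Γ K x)) (Submodule.span K _)
  refine Submodule.span_le.2 ?_ hz
  rintro _ ⟨⟨a, k⟩, rfl⟩
  change idem Γ K x * arc K a k * idem Γ K y ∈ Submodule.span K _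
  by_cases hx : x = src a
  · rw [hx, idem_src_mul_arc]
    by_cases hy : src (Γ.next^[k] a) = y
    · rw [← hy, arc_mul_idem]
      exact Submodule.subset_span ⟨a, k, rfl, rfl, rfl⟩
    · rw [arc_mul_idem_of_ne K hy]
      exact zero_mem _
  · rw [idem_mul_arc_of_ne K hx, zero_mul]
    exact zero_mem _

variable {K}

theorem mul_eq_zero_of_forall_arc_mul_eq_zero [Finite V] {x y : Γ.Vertex} {w : Γ.Alg K}
    (h : ∀ (a : Γ.Arrow) (k : ℕ), src a = x → src (Γ.next^[k] a) = y → arc K a k * w = 0)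
    (z : Γ.Alg K) : idem Γ K x * z * idem Γ K y * w = 0 := by
  refine (Submodule.span_le (p := LinearMap.ker (LinearMap.mulRight K w))).2 ?_
    (idem_mul_mul_idem_mem_span_arc K x y z)
  rintro _ ⟨a, k, hx, hy, rfl⟩
  exact h a k hx hy

theorem mul_eq_zero_of_forall_mul_arc_eq_zero [Finite V] {x y : Γ.Vertex} {w : Γ.Alg K}
    (h : ∀ (a : Γ.Arrow) (k : ℕ), src a = x → src (Γ.next^[k] a) = y → w * arc K a k = 0)
    (z : Γ.Alg K) : w * (idem Γ K x * z * idem Γ K y) = 0 := by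
  refine (Submodule.span_le (p := LinearMap.ker (LinearMap.mulLeft K w))).2 ?_
    (idem_mul_mul_idem_mem_span_arc K x y z)
  rintro _ ⟨a, k, hx, hy, rfl⟩
  exact h a k hx hy

variable (K)

open Classical in
/-- The action of the generators on the `K`-valued functions on the paths of `A` that start at `x`,
where `none` is the trivial path and `some y` the nontrivial path from `x` to `y` (for `y = x`, the
full cycle).  A generator `g` sends `f` to the function `p ↦ f (p * g)`. -/
noncomputable def pathAct (x : Γ.Vertex) : Γ.Gen → Module.End K (Option Γ.Vertex → K)
  | .vertex y =>
    { toFun := fun f i => if i.getD x = y then f i else 0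
      map_add' := fun f g => by ext; simp only [Pi.add_apply]; split_ifs <;> simp
      map_smul' := fun r f => by ext; simp }
  | .arrow a =>
    { toFun := fun f i =>
        if i.getD x = src a ∧ i ≠ some x ∧ cycle a ∈ x.1 then f (some (tgt a)) else 0
      map_add' := fun f g => by ext; simp only [Pi.add_apply]; split_ifs <;> simp
      map_smul' := fun r f => by ext; simp }

/-- The extension of `pathAct` to the free algebra. -/
noncomputable def pathRep (x : Γ.Vertex) :
    FreeAlgebra K Γ.Gen →ₐ[K] Module.End K (Option Γ.Vertex → K) :=
  FreeAlgebra.lift K (pathAct K x)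

open Classical in
theorem pathRep_freeIdem_apply (x y : Γ.Vertex) (f : Option Γ.Vertex → K) (i : Option Γ.Vertex) :
    pathRep K x (freeIdem Γ K y) f i = if i.getD x = y then f i else 0 := by
  rw [pathRep, freeIdem, FreeAlgebra.lift_ι_apply]
  rfl

open Classical in
theorem pathRep_freeArrow_apply (x : Γ.Vertex) (a : Γ.Arrow) (f : Option Γ.Vertex → K)
    (i : Option Γ.Vertex) :
    pathRep K x (freeArrow Γ K a) f i =
      if i.getD x = src a ∧ i ≠ some x ∧ cycle a ∈ x.1 then f (some (tgt a)) else 0 := by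
  rw [pathRep, freeArrow, FreeAlgebra.lift_ι_apply]
  rfl

open Classical in
theorem pathRep_freeArc_succ_apply (x : Γ.Vertex) (a : Γ.Arrow) (k : ℕ) (f : Option Γ.Vertex → K)
    (i : Option Γ.Vertex) :
    pathRep K x (freeArc Γ K a (k + 1)) f i =
      if i.getD x = src a ∧ i ≠ some x ∧ cycle a ∈ x.1 ∧ ∀ j < k, src (Γ.next^[j + 1] a) ≠ x
      then f (some (src (Γ.next^[k + 1] a))) else 0 := by
  induction k generalizing a i with
  | zero =>
    rw [freeArc, freeArc, map_mul, Module.End.mul_apply, pathRep_freeArrow_apply,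
      pathRep_freeIdem_apply]
    simp [tgt]
  | succ k ih =>
    rw [freeArc, map_mul, Module.End.mul_apply, pathRep_freeArrow_apply, ih, cycle_next]
    rw [← ite_and]
    refine if_congr ?_ rfl rfl
    rw [Nat.forall_lt_succ_left]
    simp only [Option.getD_some, tgt, ne_eq, Option.some_inj, Function.iterate_succ_apply,
      Function.iterate_zero_apply]
    tauto

open Classical in
theorem pathRep_freeArc_minimalPeriod_apply [Finite V] (x : Γ.Vertex) (a : Γ.Arrow)
    (f : Option Γ.Vertex → K) (i : Option Γ.Vertex) :
    pathRep K x (freeArc Γ K a (Function.minimalPeriod Γ.next a)) f i =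
      if src a = x ∧ i = none then f (some x) else 0 := by
  obtain ⟨k, hk⟩ := Nat.exists_eq_succ_of_ne_zero (minimalPeriod_next_pos a).ne'
  have hclosed : Γ.next^[k + 1] a = a := by
    rw [← Nat.succ_eq_add_one, ← hk, Function.iterate_minimalPeriod]
  rw [hk, Nat.succ_eq_add_one, pathRep_freeArc_succ_apply, hclosed]
  obtain rfl | hx := eq_or_ne (src a) x
  · have hreturn : ∀ j < k, src (Γ.next^[j + 1] a) ≠ src a := fun j hj hja =>
      Function.not_isPeriodicPt_of_pos_of_lt_minimalPeriod j.succ_ne_zero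
        (hk ▸ Nat.succ_lt_succ hj) (arrow_ext hja (cycle_iterate a _))
    refine if_congr ⟨?_, ?_⟩ rfl rfl
    · rintro ⟨hi, hne, -⟩
      cases i with
      | none => exact ⟨rfl, rfl⟩
      | some y => exact (hne (congrArg some hi)).elim
    · rintro ⟨-, rfl⟩
      exact ⟨rfl, (Option.some_ne_none _).symm, cycle_mem_src a, hreturn⟩
  · rw [if_neg, if_neg fun h => hx h.1]
    rintro ⟨-, -, hmem, hreturn⟩
    obtain ⟨b, hbx, hb⟩ := exists_src_eq_cycle_eq hmem
    obtain ⟨j, hj, rfl⟩ := exists_iterate_lt_minimalPeriod_eq hb.symm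
    cases j with
    | zero => exact hx hbx
    | succ j => exact hreturn j (by omega) hbx

theorem pathRep_eq_of_rel [Finite V] (x : Γ.Vertex) {p q : FreeAlgebra K Γ.Gen} (h : Rel Γ K p q) :
    pathRep K x p = pathRep K x q := by
  classical
  refine LinearMap.ext fun f => funext fun i => ?_
  cases h with
  | sum_idem =>
    have : Fintype Γ.Vertex := Fintype.ofFinite _
    rw [finsum_eq_sum_of_fintype, map_sum, map_one, LinearMap.sum_apply, Finset.sum_apply]
    simp [pathRep_freeIdem_apply]
  | idem y =>
    simp only [map_mul, Module.End.mul_apply, pathRep_freeIdem_apply, ← ite_and, and_self]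
  | orth y z hyz =>
    rw [map_mul, Module.End.mul_apply, pathRep_freeIdem_apply, pathRep_freeIdem_apply, ← ite_and,
      if_neg fun h => hyz (h.1.symm.trans h.2), map_zero, LinearMap.zero_apply, Pi.zero_apply]
  | src_mul a =>
    rw [map_mul, Module.End.mul_apply, pathRep_freeIdem_apply, pathRep_freeArrow_apply, ← ite_and]
    exact if_congr and_self_left rfl rfl
  | mul_tgt a =>
    rw [map_mul, Module.End.mul_apply, pathRep_freeArrow_apply, pathRep_freeIdem_apply,
      Option.getD_some, if_pos rfl, pathRep_freeArrow_apply]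
  | change a =>
    rw [map_mul, Module.End.mul_apply, pathRep_freeArrow_apply, pathRep_freeArrow_apply, ← ite_and,
      if_neg, map_zero, LinearMap.zero_apply, Pi.zero_apply]
    rintro ⟨⟨-, -, ha⟩, -, hne, hb⟩
    refine cycle_symm_ne (Γ.next a) (eq_of_mem_of_mem (fun h => hne (congrArg some h))
      ?_ hb ?_ ((cycle_next a).symm ▸ ha))
    · rw [tgt, ← src_symm]
      exact cycle_mem_src _
    · exact cycle_mem_src _
  | full a =>
    rw [pathRep_freeArc_minimalPeriod_apply, pathRep_freeArc_minimalPeriod_apply, src_symm]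

theorem arc_minimalPeriod_ne_zero [Finite V] (a : Γ.Arrow) :
    arc K a (Function.minimalPeriod Γ.next a) ≠ 0 := by
  intro h
  let ρ : Γ.Alg K →ₐ[K] Module.End K (Option Γ.Vertex → K) :=
    RingQuot.liftAlgHom K ⟨pathRep K (src a), fun _ _ => pathRep_eq_of_rel K (src a)⟩
  have hρ : ρ (arc K a (Function.minimalPeriod Γ.next a)) =
      pathRep K (src a) (freeArc Γ K a (Function.minimalPeriod Γ.next a)) :=
    RingQuot.liftAlgHom_mkAlgHom_apply _ _ _ _
  have hone := pathRep_freeArc_minimalPeriod_apply K (src a) a (fun _ => 1) none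
  rw [← hρ, h, map_zero] at hone
  simp at hone

theorem arc_ne_zero [Finite V] (a : Γ.Arrow) {k : ℕ} (hk : k ≤ Function.minimalPeriod Γ.next a) :
    arc K a k ≠ 0 := by
  intro h
  refine arc_minimalPeriod_ne_zero K a ?_
  rw [← Nat.add_sub_cancel' hk, arc_add, h, zero_mul]

end Algebra

end BrauerTree

section DerivedCategory

open CochainComplex

variable {C : Type*} [Category* C] [Abelian C] [HasDerivedCategory.{w} C]
  {S T : CochainComplex C ℤ}

theorem f_eq_zero_of_derivedCategoryQ_map_eq_zero {φ : S ⟶ T} (hφ : DerivedCategory.Q.map φ = 0)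
    (n : ℤ) [S.IsStrictlyLE n] [T.IsStrictlyGE n] : φ.f n = 0 := by
  have hhomology : HomologicalComplex.homologyMap φ n = 0 := by
    have h := DerivedCategory.homologyFunctorFactors_hom_naturality φ n
    rw [hφ, Functor.map_zero, zero_comp] at h
    exact (cancel_epi ((DerivedCategory.homologyFunctorFactors C n).hom.app S)).1
      (h.symm.trans comp_zero.symm)
  have : IsIso (T.homologyπ n) := T.isIso_homologyπ (n - 1) n (by simp)
    ((T.isZero_of_isStrictlyGE n (n - 1)).eq_of_src _ _)
  have : IsIso (S.iCycles n) := S.isIso_iCycles n (n + 1) (by simp)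
    ((S.isZero_of_isStrictlyLE n (n + 1)).eq_of_tgt _ _)
  have hcycles : HomologicalComplex.cyclesMap φ n = 0 := by
    rw [← cancel_mono (T.homologyπ n), zero_comp, ← HomologicalComplex.homologyπ_naturality,
      hhomology, comp_zero]
  rw [← cancel_epi (S.iCycles n), comp_zero, ← HomologicalComplex.cyclesMap_i, hcycles, zero_comp]

theorem exists_derivedCategory_hom_ne_zero {p q k : ℤ} (hpq : p + k = q) [S.IsStrictlyLE p]
    [T.IsStrictlyGE q] {g : S.X p ⟶ T.X q} (hg : g ≠ 0) (hS : S.d (p - 1) p ≫ g = 0)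
    (hT : g ≫ T.d q (q + 1) = 0) :
    ∃ f : DerivedCategory.Q.obj S ⟶ (DerivedCategory.Q.obj T)⟦k⟧, f ≠ 0 := by
  let z : HomComplex.Cocycle S T k := .mk (.single g k) (k + 1) rfl (by
    rw [HomComplex.Cochain.δ_single g k (k + 1) rfl (p - 1) (q + 1) (by simp) rfl, hS, hT]
    simp)
  have : (T⟦k⟧).IsStrictlyGE p := T.isStrictlyGE_shift q k p (by omega)
  refine ⟨DerivedCategory.Q.map (HomComplex.Cocycle.equivHomShift.symm z) ≫
    (DerivedCategory.Q.commShiftIso k).hom.app T, fun h => hg ?_⟩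
  have hf : (z.1.rightShift k 0 (zero_add k)).v p p (add_zero p) = 0 :=
    f_eq_zero_of_derivedCategoryQ_map_eq_zero
      ((cancel_mono ((DerivedCategory.Q.commShiftIso k).hom.app T)).1 (h.trans zero_comp.symm)) p
  rw [HomComplex.Cochain.rightShift_v _ k 0 (zero_add k) p p (add_zero p) q hpq] at hf
  exact (HomComplex.Cochain.single_v g k hpq).symm.trans
    ((cancel_mono _).1 (hf.trans zero_comp.symm))

end DerivedCategory

section Complexes

variable {R : Type u} [Ring R] {S T : CochainComplex (ModuleCat.{u} R) ℤ}

theorem IsTwoTermPerfect.isStrictlyGE (hT : IsTwoTermPerfect T) : T.IsStrictlyGE 0 :=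
  (T.isStrictlyGE_iff 0).2 fun k hk => hT.isZero k hk.ne (by omega)

theorem IsTwoTermPerfect.isStrictlyLE (hT : IsTwoTermPerfect T) : T.IsStrictlyLE 1 :=
  (T.isStrictlyLE_iff 1).2 fun k hk => hT.isZero k (by omega) hk.ne'

theorem not_homVanishes_neg_one [HasDerivedCategory.{w} (ModuleCat.{u} R)] [S.IsStrictlyLE 1]
    [T.IsStrictlyGE 0] {g : S.X 1 ⟶ T.X 0} (hg : g ≠ 0) (hS : S.d 0 1 ≫ g = 0)
    (hT : g ≫ T.d 0 1 = 0) : ¬ HomVanishes S T (-1) := by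
  obtain ⟨f, hf⟩ := exists_derivedCategory_hom_ne_zero (p := 1) (q := 0) (k := -1) rfl hg hS hT
  exact fun hvan => hf (hvan f)

end Complexes

section Pi

variable {R ι P P' M : Type*} [Ring R] [AddCommGroup P] [Module R P] [AddCommGroup P']
  [Module R P'] [AddCommGroup M] [Module R M] {Q : ι → Type*} [∀ i, AddCommGroup (Q i)]
  [∀ i, Module R (Q i)] {g : P →ₗ[R] P'}

theorem comp_eq_zero_of_forall_component_source [Finite ι] (e : M ≃ₗ[R] (∀ i, Q i))
    (h : ∀ (i : ι) (f : Q i →ₗ[R] P), g ∘ₗ f = 0) (d : M →ₗ[R] P) : g ∘ₗ d = 0 := by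
  classical
  have hpi : g ∘ₗ d ∘ₗ e.symm.toLinearMap = 0 := LinearMap.pi_ext' fun i =>
    h i (d ∘ₗ e.symm.toLinearMap ∘ₗ LinearMap.single R Q i)
  ext x
  simpa only [LinearMap.comp_apply, LinearMap.zero_apply, LinearEquiv.coe_coe,
    e.symm_apply_apply] using LinearMap.congr_fun hpi (e x)

theorem comp_eq_zero_of_forall_component_target (e : M ≃ₗ[R] (∀ i, Q i))
    (h : ∀ (i : ι) (f : P' →ₗ[R] Q i), f ∘ₗ g = 0) (d : P' →ₗ[R] M) : d ∘ₗ g = 0 := by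
  ext x
  refine e.map_eq_zero_iff.1 (funext fun i => ?_)
  exact LinearMap.congr_fun (h i (LinearMap.proj i ∘ₗ e.toLinearMap ∘ₗ d)) x

end Pi

namespace BrauerTree

section Proj

variable {V : Type v} {Γ : BrauerTree V} {K : Type u} [Field K]

theorem mul_idem_of_mem_proj {x : Γ.Vertex} {z : Γ.Alg K} (hz : z ∈ Ideal.span {idem Γ K x}) :
    z * idem Γ K x = z := by
  obtain ⟨r, rfl⟩ := Ideal.mem_span_singleton'.1 hz
  rw [mul_assoc, isIdempotentElem_idem K x]

theorem idem_mem_proj (x : Γ.Vertex) : idem Γ K x ∈ Ideal.span {idem Γ K x} :=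
  Ideal.mem_span_singleton_self _

/-- Right multiplication by `w`, as a map `A e_x → A e_y`. -/
noncomputable def projMulRight {x y : Γ.Vertex} {w : Γ.Alg K} (hw : w * idem Γ K y = w) :
    Γ.Proj K x →ₗ[Γ.Alg K] Γ.Proj K y :=
  (LinearMap.toSpanSingleton (Γ.Alg K) (Γ.Alg K) w).restrict fun z _ =>
    Ideal.mem_span_singleton'.2 ⟨z * w, by rw [mul_assoc, hw, LinearMap.toSpanSingleton_apply]; rfl⟩

theorem coe_projMulRight_apply {x y : Γ.Vertex} {w : Γ.Alg K} (hw : w * idem Γ K y = w)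
    (z : Γ.Proj K x) : (projMulRight hw z : Γ.Alg K) = z * w := rfl

theorem exists_coe_projHom_apply_eq {x y : Γ.Vertex} (f : Γ.Proj K x →ₗ[Γ.Alg K] Γ.Proj K y) :
    ∃ v : Γ.Alg K, ∀ z, (f z : Γ.Alg K) = z * (idem Γ K x * v * idem Γ K y) := by
  refine ⟨f ⟨idem Γ K x, idem_mem_proj x⟩, fun z => ?_⟩
  have hz : z = z.1 • (⟨idem Γ K x, idem_mem_proj x⟩ : Γ.Proj K x) :=
    Subtype.ext (mul_idem_of_mem_proj z.2).symm
  rw [mul_assoc, mul_idem_of_mem_proj (f _).2, ← mul_assoc, mul_idem_of_mem_proj z.2]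
  conv_lhs => rw [hz, map_smul]
  rfl

end Proj

section Complement

variable {V : Type v} {Γ : BrauerTree V} {K : Type u} [Field K] {a : Γ.Arrow} {m : ℕ}

theorem iterate_minimalPeriod_sub_iterate (hm : m ≤ Function.minimalPeriod Γ.next a) :
    Γ.next^[Function.minimalPeriod Γ.next a - m] (Γ.next^[m + 1] a) = Γ.next a := by
  rw [← Function.iterate_add_apply, ← Nat.add_assoc, Nat.sub_add_cancel hm,
    Function.iterate_succ_apply', Function.iterate_minimalPeriod]

variable (K a m) in
/-- The path along the `A`-cycle of `a` that completes the path of `m` arrows beginning with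
`Γ.next a` to the full cycle; it leads from `src (Γ.next^[m + 1] a)` to `src (Γ.next a)`. -/
noncomputable def complArc : Γ.Alg K :=
  arc K (Γ.next^[m + 1] a) (Function.minimalPeriod Γ.next a - m)

theorem complArc_ne_zero [Finite V] : complArc K a m ≠ 0 := by
  refine arc_ne_zero K _ ((Nat.sub_le _ _).trans_eq ?_)
  exact minimalPeriod_next_eq_of_cycle_eq (cycle_iterate a (m + 1)).symm

theorem complArc_mul_idem (hm : m ≤ Function.minimalPeriod Γ.next a) :
    complArc K a m * idem Γ K (src (Γ.next a)) = complArc K a m := by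
  rw [← iterate_minimalPeriod_sub_iterate hm]
  exact arc_mul_idem K _ _

namespace Diagram.Overlap

variable [Finite V] {D D' : Γ.Diagram} (h : D.Overlap D' a m)

include h

theorem arc_mul_complArc {d : Γ.Arrow} {k : ℕ} (hd : src d ∈ D'.sources)
    (hk : src (Γ.next^[k] d) = src (Γ.next^[m + 1] a)) : arc K d k * complArc K a m = 0 := by
  have hp := h.lt_minimalPeriod
  rcases src_eq_src_iff.1 hk.symm with hsymm | hsymm
  · rw [complArc, hsymm, ← arc_add]
    refine arc_eq_zero K d ?_
    rw [minimalPeriod_next_eq_of_cycle_eq (b := a)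
      (by rw [← cycle_iterate d k, ← hsymm, cycle_iterate])]
    suffices ¬ k ≤ m by omega
    intro hkm
    obtain ⟨j, rfl⟩ := Nat.exists_eq_add_of_le hkm
    rw [Nat.add_assoc, Function.iterate_add_apply] at hsymm
    obtain rfl := Γ.next.injective.iterate k hsymm
    exact h.src_notMem_sources (by omega) hd
  · rw [complArc, hsymm]
    refine arc_mul_arc_symm K d ?_ (by omega)
    rintro rfl
    exact h.src_notMem_sources le_rfl (hk ▸ hd)

theorem complArc_mul_arc {d : Γ.Arrow} {k : ℕ} (hd : src d = src (Γ.next a))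
    (hk : src (Γ.next^[k] d) ∈ D.sinks) : complArc K a m * arc K d k = 0 := by
  have hp := h.lt_minimalPeriod
  have hend : Γ.next^[Function.minimalPeriod Γ.next a - m] (Γ.next^[m + 1] a) = Γ.next a :=
    iterate_minimalPeriod_sub_iterate (by omega)
  rcases src_eq_src_iff.1 hd with rfl | rfl
  · have hlt : m < k := by
      by_contra! hle
      exact h.src_notMem_sinks hle hk
    have hsplit := arc_add K (Γ.next^[m + 1] a) (Function.minimalPeriod Γ.next a - m) k
    rw [hend] at hsplit
    rw [complArc, ← hsplit]
    refine arc_eq_zero K _ ?_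
    rw [minimalPeriod_next_eq_of_cycle_eq (cycle_iterate a (m + 1))]
    omega
  · rw [complArc, ← hend]
    refine arc_mul_arc_symm K _ (by omega) ?_
    rintro rfl
    exact h.src_notMem_sinks m.zero_le (src_symm (Γ.next a) ▸ hk)

end Diagram.Overlap

end Complement

section Main

variable {V : Type v} [Finite V] {Γ : BrauerTree V} {K : Type u} [Field K] {a : Γ.Arrow} {m : ℕ}

namespace Diagram

variable {D D' : Γ.Diagram}

theorem Overlap.exists_projHom (h : D.Overlap D' a m) :
    ∃ g : Γ.Proj K (src (Γ.next^[m + 1] a)) →ₗ[Γ.Alg K] Γ.Proj K (src (Γ.next a)), g ≠ 0 ∧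
      (∀ (x : D'.sources) (f : Γ.Proj K x.1 →ₗ[Γ.Alg K] _), g ∘ₗ f = 0) ∧
      ∀ (y : D.sinks) (f : _ →ₗ[Γ.Alg K] Γ.Proj K y.1), f ∘ₗ g = 0 := by
  have hm : m ≤ Function.minimalPeriod Γ.next a := (Nat.le_succ m).trans h.lt_minimalPeriod.le
  refine ⟨projMulRight (complArc_mul_idem hm), fun hg => ?_, fun x f => ?_, fun y f => ?_⟩
  · have hidem := congrArg Subtype.val (LinearMap.congr_fun hg ⟨_, idem_mem_proj _⟩)
    rw [coe_projMulRight_apply, complArc, idem_src_mul_arc] at hidem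
    exact complArc_ne_zero hidem
  · obtain ⟨v, hv⟩ := exists_coe_projHom_apply_eq f
    refine LinearMap.ext fun z => Subtype.ext ?_
    rw [LinearMap.comp_apply, coe_projMulRight_apply, hv, mul_assoc,
      mul_eq_zero_of_forall_arc_mul_eq_zero fun d k hd hk => h.arc_mul_complArc (hd ▸ x.2) hk,
      mul_zero]
    rfl
  · obtain ⟨v, hv⟩ := exists_coe_projHom_apply_eq f
    refine LinearMap.ext fun z => Subtype.ext ?_
    rw [LinearMap.comp_apply, hv, coe_projMulRight_apply, mul_assoc,
      mul_eq_zero_of_forall_mul_arc_eq_zero fun d k hd hk => h.complArc_mul_arc hd (hk ▸ y.2),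
      mul_zero]
    rfl

theorem Overlap.not_homVanishes [HasDerivedCategory.{w} (ModuleCat.{max u v} (Γ.Alg K))]
    {S T : Γ.Cplx K} [S.IsStrictlyLE 1] [T.IsStrictlyGE 0] (h : D.Overlap D' a m)
    (hS : D'.IsDiagramOf S) (hT : D.IsDiagramOf T) : ¬ HomVanishes S T (-1) := by
  classical
  obtain ⟨eS₀, eS₁, -⟩ := hS
  obtain ⟨eT₀, eT₁, -⟩ := hT
  obtain ⟨g, hg, hsource, hsink⟩ := h.exists_projHom (K := K)
  let s : D.sources := ⟨_, h.source_mem⟩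
  let t : D'.sinks := ⟨_, h.sink_mem⟩
  let π := LinearMap.proj (R := Γ.Alg K) (φ := fun y : D'.sinks => Γ.Proj K y.1) t ∘ₗ
    eS₁.toLinearMap
  let ι := eT₀.symm.toLinearMap ∘ₗ LinearMap.single (Γ.Alg K) (fun x : D.sources => Γ.Proj K x.1) s
  have hπ : Function.Surjective π :=
    (LinearMap.proj_surjective (R := Γ.Alg K) t).comp eS₁.surjective
  have hι : Function.Injective ι := eT₀.symm.injective.comp
    (Pi.single_injective (M := fun x : D.sources => Γ.Proj K x.1) s)
  refine not_homVanishes_neg_one (g := ModuleCat.ofHom (ι ∘ₗ g ∘ₗ π)) (fun hzero => hg ?_) ?_ ?_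
  · have hcomp : ι ∘ₗ g ∘ₗ π = 0 := congrArg ModuleCat.Hom.hom hzero
    rw [← LinearMap.cancel_left hι, ← LinearMap.cancel_right hπ, LinearMap.comp_zero,
      LinearMap.zero_comp]
    exact hcomp
  · have hd := comp_eq_zero_of_forall_component_source eS₀ hsource (π ∘ₗ (S.d 0 1).hom)
    refine ModuleCat.hom_ext ?_
    change ι ∘ₗ (g ∘ₗ π ∘ₗ (S.d 0 1).hom) = 0
    rw [hd, LinearMap.comp_zero]
  · have hd := comp_eq_zero_of_forall_component_target eT₁ hsink ((T.d 0 1).hom ∘ₗ ι)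
    refine ModuleCat.hom_ext ?_
    change (((T.d 0 1).hom ∘ₗ ι) ∘ₗ g) ∘ₗ π = 0
    rw [hd, LinearMap.zero_comp]

end Diagram

end Main

end BrauerTree

theorem hom_nonzero_of_many_components_general {K : Type u} [Field K] {V : Type v} [Finite V]
    (Γ : BrauerTree V) [HasDerivedCategory.{w} (ModuleCat.{max u v} (Γ.Alg K))]
    (Ti Tj : Γ.Cplx K) [Ti.IsStrictlyGE 0] [Ti.IsStrictlyLE 1] [Tj.IsStrictlyGE 0]
    [Tj.IsStrictlyLE 1] (Di Dj : Γ.Diagram) (hDi : Di.IsDiagramOf Ti) (hDj : Dj.IsDiagramOf Tj)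
    (h : Nontrivial (Di.inter Dj).ConnectedComponent) :
    ¬ HomVanishes Ti Tj (-1) ∧ ¬ HomVanishes Tj Ti (-1) := by
  have hinter : ¬ (Di.inter Dj).Preconnected := fun hpre =>
    not_subsingleton _ hpre.subsingleton_connectedComponent
  obtain ⟨⟨a, m, hij⟩, b, n, hji⟩ := BrauerTree.Diagram.exists_overlap hinter
  exact ⟨hji.not_homVanishes hDi hDj, hij.not_homVanishes hDj hDi⟩

theorem hom_nonzero_of_many_components {K : Type u} [Field K] [IsAlgClosed K]
    {V : Type v} [Finite V] (Γ : BrauerTree V)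
    [HasDerivedCategory.{w} (ModuleCat.{max u v} (Γ.Alg K))]
    (Ti Tj : Γ.Cplx K)
    (hTi : IsPartialTiltingPresentation Ti) (hTj : IsPartialTiltingPresentation Tj)
    (Di Dj : Γ.Diagram) (hDi : Di.IsDiagramOf Ti) (hDj : Dj.IsDiagramOf Tj)
    (h : Nontrivial (Di.inter Dj).ConnectedComponent) :
    ¬ HomVanishes Ti Tj (-1) ∨ ¬ HomVanishes Tj Ti (-1) := by
  obtain ⟨_, -, -, hi⟩ := hTi.presentation
  obtain ⟨_, -, -, hj⟩ := hTj.presentation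
  have := hi.isStrictlyGE
  have := hi.isStrictlyLE
  have := hj.isStrictlyGE
  have := hj.isStrictlyLE
  exact Or.inl (hom_nonzero_of_many_components_general Γ Ti Tj Di Dj hDi hDj h).1
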